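/- Let P be a Gorenstein polytope that is reducible with factors F and G. If F is a lattice pyramid, then P is a lattice pyramid. -/

import Mathlib

open Pointwise

/-- A point of `ℝ^d` is a lattice point if all its coordinates are integers. -/
def IsLatticePt {d : ℕ} (x : Fin d → ℝ) : Prop := ∀ i, ∃ z : ℤ, x i = (z : ℝ)

/-- A lattice polytope is the (non-empty) convex hull of finitely many lattice points. -/
def IsLatticePolytope {d : ℕ} (P : Set (Fin d → ℝ)) : Prop :=
  ∃ V : Finset (Fin d → ℝ), V.Nonempty ∧ (∀ v ∈ V, IsLatticePt v) ∧
    P = convexHull ℝ (V : Set (Fin d → ℝ))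

/-- The dimension of a polytope: the dimension of the direction of its affine hull. -/
noncomputable def polyDim {d : ℕ} (P : Set (Fin d → ℝ)) : ℕ :=
  Module.finrank ℝ (affineSpan ℝ P).direction

/-- A polytope is hollow if its relative interior contains no lattice point. -/
def IsHollow {d : ℕ} (P : Set (Fin d → ℝ)) : Prop :=
  ∀ x ∈ intrinsicInterior ℝ P, ¬ IsLatticePt x

/-- A facet of `P`: a non-empty exposed face of dimension `dim P - 1`. -/
def IsFacet {d : ℕ} (P F : Set (Fin d → ℝ)) : Prop :=
  IsExposed ℝ P F ∧ F.Nonempty ∧ polyDim F + 1 = polyDim P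

/-- An affine functional is integral on `P` if it takes integer values on all
lattice points of the affine hull of `P`. -/
def IsIntegralOn {d : ℕ} (P : Set (Fin d → ℝ)) (u : (Fin d → ℝ) →ᵃ[ℝ] ℝ) : Prop :=
  ∀ y ∈ affineSpan ℝ P, IsLatticePt y → ∃ z : ℤ, u y = (z : ℝ)

/-- `P` is reflexive: there is a lattice point `x` in the relative interior of `P`
such that every facet of `P` has lattice distance one from `x`, i.e. for every facet `F`
there is an integral affine functional that is constant on `F` and exceeds its value
at `x` by exactly `1`. -/
def IsReflexivePolytope {d : ℕ} (P : Set (Fin d → ℝ)) : Prop :=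
  ∃ x ∈ intrinsicInterior ℝ P, IsLatticePt x ∧
    ∀ F : Set (Fin d → ℝ), IsFacet P F →
      ∃ u : (Fin d → ℝ) →ᵃ[ℝ] ℝ, IsIntegralOn P u ∧ ∀ f ∈ F, u f = u x + 1

/-- `P` is Gorenstein if some positive integer multiple `r • P` is reflexive. -/
def IsGorenstein {d : ℕ} (P : Set (Fin d → ℝ)) : Prop :=
  ∃ r : ℕ, 0 < r ∧ IsReflexivePolytope ((r : ℝ) • P)

/-- `P` is Gorenstein of codegree `r` if `r • P` is reflexive (`r` positive). -/
def IsGorensteinOfCodeg {d : ℕ} (P : Set (Fin d → ℝ)) (r : ℕ) : Prop :=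
  0 < r ∧ IsReflexivePolytope ((r : ℝ) • P)

/-- The codegree of `P`: the smallest positive integer `r` such that `r • P` is not hollow. -/
noncomputable def polyCodeg {d : ℕ} (P : Set (Fin d → ℝ)) : ℕ :=
  sInf {r : ℕ | 0 < r ∧ ¬ IsHollow ((r : ℝ) • P)}

/-- The degree of `P`: `dim P + 1 - codeg P`. -/
noncomputable def polyDeg {d : ℕ} (P : Set (Fin d → ℝ)) : ℕ :=
  polyDim P + 1 - polyCodeg P

/-- Unimodular equivalence of lattice polytopes: an affine map carrying `P` onto `Q`,
with an affine inverse on affine hulls, such that both maps preserve lattice points of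
the affine hulls. -/
def LatticeIso {d e : ℕ} (P : Set (Fin d → ℝ)) (Q : Set (Fin e → ℝ)) : Prop :=
  ∃ (f : (Fin d → ℝ) →ᵃ[ℝ] (Fin e → ℝ)) (g : (Fin e → ℝ) →ᵃ[ℝ] (Fin d → ℝ)),
    f '' P = Q ∧ g '' Q = P ∧
    (∀ x ∈ affineSpan ℝ P, g (f x) = x) ∧ (∀ y ∈ affineSpan ℝ Q, f (g y) = y) ∧
    (∀ x ∈ affineSpan ℝ P, IsLatticePt x → IsLatticePt (f x)) ∧
    (∀ y ∈ affineSpan ℝ Q, IsLatticePt y → IsLatticePt (g y))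

/-- The lattice pyramid `conv(P' × {0}, (0,1))` over `P' ⊆ ℝ^m`. -/
def pyramidOver {m : ℕ} (P' : Set (Fin m → ℝ)) : Set (Fin (m + 1) → ℝ) :=
  convexHull ℝ ((fun x => Fin.snoc x (0 : ℝ)) '' P' ∪ {Fin.snoc (0 : Fin m → ℝ) (1 : ℝ)})

/-- `P` is a lattice pyramid if it is a single lattice point or is isomorphic to a
lattice pyramid over a lattice polytope. -/
def IsLatticePyramid {d : ℕ} (P : Set (Fin d → ℝ)) : Prop :=
  (∃ x : Fin d → ℝ, IsLatticePt x ∧ P = {x}) ∨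
  ∃ (m : ℕ) (P' : Set (Fin m → ℝ)), IsLatticePolytope P' ∧ LatticeIso P (pyramidOver P')

/-- The Cayley polytope `P_1 * ⋯ * P_l ⊆ ℝ^{n+l}` of `P_1, …, P_l ⊆ ℝ^n`:
the convex hull of the sets `P_i × {e_i}`. -/
def cayley {n l : ℕ} (P : Fin l → Set (Fin n → ℝ)) : Set (Fin (n + l) → ℝ) :=
  convexHull ℝ (⋃ i : Fin l, (fun x => Fin.append x (Pi.single i (1 : ℝ))) '' P i)

/-- The Cayley polytope `F * G ⊆ ℝ^{n+2}` of two polytopes `F, G ⊆ ℝ^n`. -/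
def cayleyTwo {n : ℕ} (F G : Set (Fin n → ℝ)) : Set (Fin (n + 2) → ℝ) :=
  convexHull ℝ
    ((fun x => Fin.append x ![(1 : ℝ), 0]) '' F ∪ (fun x => Fin.append x ![(0 : ℝ), 1]) '' G)

/-- `P` is a Cayley join of `F` and `G` if `P ≅ F * G` and `dim F + dim G = dim P - 1`. -/
def IsCayleyJoin {d n : ℕ} (P : Set (Fin d → ℝ)) (F G : Set (Fin n → ℝ)) : Prop :=
  LatticeIso P (cayleyTwo F G) ∧ polyDim F + polyDim G + 1 = polyDim P

/-- `P` is reducible with factors `F` and `G`: a Cayley join with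
`codeg F + codeg G = codeg P`. -/
def IsReducibleWith {d n : ℕ} (P : Set (Fin d → ℝ)) (F G : Set (Fin n → ℝ)) : Prop :=
  IsCayleyJoin P F G ∧ polyCodeg F + polyCodeg G = polyCodeg P

/-- `P` is reducible: it is a single lattice point (by convention) or is reducible
with some factors `F` and `G` which are lattice polytopes. -/
def IsReducible {d : ℕ} (P : Set (Fin d → ℝ)) : Prop :=
  (∃ x : Fin d → ℝ, IsLatticePt x ∧ P = {x}) ∨
  ∃ (n : ℕ) (F G : Set (Fin n → ℝ)), IsLatticePolytope F ∧ IsLatticePolytope G ∧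
    IsReducibleWith P F G

/-- `P` is a Cayley polytope: a single lattice point, or isomorphic to a Cayley polytope
of `l > 1` lattice polytopes. -/
def IsCayleyPolytope {d : ℕ} (P : Set (Fin d → ℝ)) : Prop :=
  (∃ x : Fin d → ℝ, IsLatticePt x ∧ P = {x}) ∨
  ∃ (n l : ℕ) (Q : Fin l → Set (Fin n → ℝ)), 1 < l ∧ (∀ i, IsLatticePolytope (Q i)) ∧
    LatticeIso P (cayley Q)

/-- `P` is IDP if for every `k ≥ 2` every lattice point of `k • P` is a sum of `k`
lattice points of `P`. -/
def IsIDP {d : ℕ} (P : Set (Fin d → ℝ)) : Prop :=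
  ∀ k : ℕ, 2 ≤ k → ∀ x : Fin d → ℝ, IsLatticePt x → x ∈ (k : ℝ) • P →
    ∃ p : Fin k → (Fin d → ℝ), (∀ i, p i ∈ P ∧ IsLatticePt (p i)) ∧ x = ∑ i, p i

/-- The standard simplex `Δ_s = conv(0, e_1, …, e_s) ⊆ ℝ^s`. -/
def stdSimplexLP (s : ℕ) : Set (Fin s → ℝ) :=
  convexHull ℝ (insert 0 (Set.range fun i : Fin s => Pi.single i (1 : ℝ)))

/-- The product of `F ⊆ ℝ^m` and `G ⊆ ℝ^n` inside `ℝ^{m+n}`. -/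
def prodPoly {m n : ℕ} (F : Set (Fin m → ℝ)) (G : Set (Fin n → ℝ)) : Set (Fin (m + n) → ℝ) :=
  (fun p : (Fin m → ℝ) × (Fin n → ℝ) => Fin.append p.1 p.2) '' (F ×ˢ G)

/-- The free join `conv(F × 0 × {0} ∪ 0 × G × {1}) ⊆ ℝ^m × ℝ^n × ℝ`. -/
def freeJoin {m n : ℕ} (F : Set (Fin m → ℝ)) (G : Set (Fin n → ℝ)) :
    Set (Fin (m + n + 1) → ℝ) :=
  convexHull ℝ
    ((fun x => Fin.snoc (Fin.append x (0 : Fin n → ℝ)) (0 : ℝ)) '' F ∪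
     (fun y => Fin.snoc (Fin.append (0 : Fin m → ℝ) y) (1 : ℝ)) '' G)

/-!
A lattice pyramid has larger codegree than its base, and `codeg (F * G) ≤ codeg F + codeg G`. If
`F` has apex `v` and base `B`, then `P = conv ({v} ∪ T)` with `T = B * G`, so
`codeg T < codeg P ≤ r` where `rP` is reflexive. Hence `v` is not in the affine hull of `T` and
`rT` is a facet of `rP`. Since `codeg T ≤ r - 1`, some `p` in the relative interior of `T` makes
`(r - 1)p` a lattice point, and then `(r - 1)p + v` is an interior lattice point of `rP`. A
reflexive polytope has only one, so the facet `rT` has lattice distance one from `(r - 1)p + v`.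
Translating by `(r - 1)p`, this says that `v` has lattice height one over `T`.
-/

section IntrinsicInterior

theorem le_of_mem_convexHull {E : Type*} [AddCommGroup E] [Module ℝ E] {u : E →ᵃ[ℝ] ℝ} {V : Set E}
    {c : ℝ} (h : ∀ v ∈ V, u v ≤ c) {q : E} (hq : q ∈ convexHull ℝ V) : u q ≤ c :=
  convexHull_min h ((convex_Iic c).affine_preimage u) hq

variable {E : Type*} [NormedAddCommGroup E] [NormedSpace ℝ E] {s : Set E} {z q : E}

theorem exists_lineMap_neg_mem_of_mem_intrinsicInterior (hz : z ∈ intrinsicInterior ℝ s)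
    (hq : q ∈ affineSpan ℝ s) : ∃ ε : ℝ, 0 < ε ∧ AffineMap.lineMap z q (-ε) ∈ s := by
  obtain ⟨y, hy, rfl⟩ := mem_intrinsicInterior.1 hz
  let line : ℝ → affineSpan ℝ s := fun t =>
    ⟨AffineMap.lineMap (y : E) q t, AffineMap.lineMap_mem t y.2 hq⟩
  have hline : Continuous line := AffineMap.lineMap_continuous.subtype_mk _
  have hline0 : line 0 = y := Subtype.ext (AffineMap.lineMap_apply_zero _ _)
  have hnhds : line ⁻¹' interior ((↑) ⁻¹' s) ∈ nhds (0 : ℝ) :=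
    hline.continuousAt.preimage_mem_nhds (by rw [hline0]; exact isOpen_interior.mem_nhds hy)
  obtain ⟨ε, hε, hball⟩ := Metric.mem_nhds_iff.1 hnhds
  have hmem : -(ε / 2) ∈ Metric.ball (0 : ℝ) ε := by
    rw [mem_ball_zero_iff, norm_neg, Real.norm_of_nonneg (half_pos hε).le]
    exact half_lt_self hε
  have hline_mem : line (-(ε / 2)) ∈ ((↑) ⁻¹' s : Set (affineSpan ℝ s)) :=
    interior_subset (hball hmem)
  exact ⟨ε / 2, half_pos hε, hline_mem⟩

theorem eq_of_isMaxOn_of_mem_intrinsicInterior {u : E →ᵃ[ℝ] ℝ} (hz : z ∈ intrinsicInterior ℝ s)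
    (hu : IsMaxOn u s z) (hq : q ∈ affineSpan ℝ s) : u q = u z := by
  have hconst : Set.EqOn u (AffineMap.const ℝ E (u z)) s := by
    intro p hp
    obtain ⟨ε, hε, hmem⟩ := exists_lineMap_neg_mem_of_mem_intrinsicInterior hz
      (subset_affineSpan ℝ s hp)
    have hle : u (AffineMap.lineMap z p (-ε)) ≤ u z := hu hmem
    rw [AffineMap.apply_lineMap, AffineMap.lineMap_apply_ring'] at hle
    have hge : u z ≤ u p := by nlinarith
    exact le_antisymm (hu hp) hge
  exact AffineMap.eqOn_affineSpan hconst hq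

theorem exists_isMaxOn_and_lt_of_notMem_interior (hs : Convex ℝ s)
    (hne : (interior s).Nonempty) (hz : z ∉ interior s) :
    ∃ f : E →L[ℝ] ℝ, IsMaxOn f s z ∧ ∃ q ∈ s, f q < f z := by
  obtain ⟨f, hf⟩ := geometric_hahn_banach_open_point hs.interior isOpen_interior hz
  obtain ⟨y, hy⟩ := hne
  refine ⟨f, fun q hq => ?_, y, interior_subset hy, hf y hy⟩
  have hq' : q ∈ closure (interior s) := by
    rw [hs.closure_interior_eq_closure_of_nonempty_interior ⟨y, hy⟩]
    exact subset_closure hq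
  exact closure_minimal (fun w hw => (hf w hw).le) (isClosed_le f.continuous continuous_const) hq'

theorem exists_isMaxOn_and_lt_of_notMem_intrinsicInterior [FiniteDimensional ℝ E]
    (hs : Convex ℝ s) (hzs : z ∈ s) (hz : z ∉ intrinsicInterior ℝ s) :
    ∃ u : E →ᵃ[ℝ] ℝ, IsMaxOn u s z ∧ ∃ q ∈ s, u q < u z := by
  let z' : affineSpan ℝ s := ⟨z, subset_affineSpan ℝ s hzs⟩
  have : Nonempty (affineSpan ℝ s) := ⟨z'⟩
  let e : (affineSpan ℝ s).direction ≃ₜ affineSpan ℝ s :=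
    (AffineIsometryEquiv.vaddConst ℝ z').toHomeomorph
  let C : Set (affineSpan ℝ s).direction := e ⁻¹' ((↑) ⁻¹' s)
  have hC : Convex ℝ C := hs.affine_preimage
    ((affineSpan ℝ s).subtype.comp (AffineEquiv.vaddConst ℝ z').toAffineMap)
  have hint : interior C = e ⁻¹' interior ((↑) ⁻¹' s) := (e.preimage_interior _).symm
  have he0 : e 0 = z' := Subtype.ext (zero_add z)
  have hne : (interior C).Nonempty := by
    obtain ⟨_, y, hy, -⟩ := Set.Nonempty.intrinsicInterior hs ⟨z, hzs⟩
    rw [hint]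
    exact ⟨e.symm y, by simpa using hy⟩
  have h0 : (0 : (affineSpan ℝ s).direction) ∉ interior C := by
    rw [hint, Set.mem_preimage, he0]
    exact fun h => hz (mem_intrinsicInterior.2 ⟨z', h, rfl⟩)
  obtain ⟨f, hle, y, hy, hlt⟩ := exists_isMaxOn_and_lt_of_notMem_interior hC hne h0
  obtain ⟨l, hl⟩ := LinearMap.exists_extend (f : (affineSpan ℝ s).direction →ₗ[ℝ] ℝ)
  have hl' : ∀ x : (affineSpan ℝ s).direction, l (e x) = f x + l z := fun x =>
    (map_add l _ _).trans (congrArg (· + l z) (LinearMap.congr_fun hl x))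
  refine ⟨l.toAffineMap, fun q hq => ?_, e y, hy, ?_⟩
  · obtain ⟨x, hx⟩ := e.surjective ⟨q, subset_affineSpan ℝ s hq⟩
    have hxq : (e x : E) = q := congrArg Subtype.val hx
    have hfx : f x ≤ f 0 := hle (show (e x : E) ∈ s from hxq ▸ hq)
    have : l q = f x + l z := hxq ▸ hl' x
    simpa [this] using hfx
  · simpa [hl'] using hlt

theorem mem_intrinsicInterior_iff_forall_isMaxOn [FiniteDimensional ℝ E] (hs : Convex ℝ s) :
    z ∈ intrinsicInterior ℝ s ↔
      z ∈ s ∧ ∀ u : E →ᵃ[ℝ] ℝ, IsMaxOn u s z → ∀ q ∈ s, u q = u z := by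
  refine ⟨fun hz => ⟨intrinsicInterior_subset hz, fun u hu q hq =>
    eq_of_isMaxOn_of_mem_intrinsicInterior hz hu (subset_affineSpan ℝ s hq)⟩, ?_⟩
  rintro ⟨hzs, hconst⟩
  by_contra hz
  obtain ⟨u, hu, q, hq, hlt⟩ := exists_isMaxOn_and_lt_of_notMem_intrinsicInterior hs hzs hz
  exact hlt.ne (hconst u hu q hq)

theorem intrinsicInterior_subset_of_subset_affineSpan [FiniteDimensional ℝ E] {t : Set E}
    (ht : Convex ℝ t) (hst : s ⊆ t) (hts : t ⊆ affineSpan ℝ s) :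
    intrinsicInterior ℝ s ⊆ intrinsicInterior ℝ t := fun _ hz =>
  (mem_intrinsicInterior_iff_forall_isMaxOn ht).2 ⟨hst (intrinsicInterior_subset hz),
    fun _ hu _ hq => eq_of_isMaxOn_of_mem_intrinsicInterior hz (hu.on_subset hst) (hts hq)⟩

theorem image_mem_intrinsicInterior_image {E' : Type*} [NormedAddCommGroup E'] [NormedSpace ℝ E']
    [FiniteDimensional ℝ E'] (hs : Convex ℝ s) (φ : E →ᵃ[ℝ] E') (hz : z ∈ intrinsicInterior ℝ s) :
    φ z ∈ intrinsicInterior ℝ (φ '' s) := by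
  refine (mem_intrinsicInterior_iff_forall_isMaxOn (hs.affine_image φ)).2
    ⟨Set.mem_image_of_mem φ (intrinsicInterior_subset hz), fun u hu => ?_⟩
  have hmax : IsMaxOn (u.comp φ) s z := fun q hq => hu (Set.mem_image_of_mem φ hq)
  rintro _ ⟨q, hq, rfl⟩
  have heq : u.comp φ q = u.comp φ z :=
    eq_of_isMaxOn_of_mem_intrinsicInterior hz hmax (subset_affineSpan ℝ s hq)
  exact heq

theorem lineMap_mem_intrinsicInterior_convexHull_union [FiniteDimensional ℝ E]
    {t : Set E} {x y : E} {c : ℝ}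
    (hx : x ∈ intrinsicInterior ℝ s) (hy : y ∈ intrinsicInterior ℝ t) (hc : c ∈ Set.Ioo 0 1) :
    AffineMap.lineMap x y c ∈ intrinsicInterior ℝ (convexHull ℝ (s ∪ t)) := by
  have hs : s ⊆ convexHull ℝ (s ∪ t) := Set.subset_union_left.trans (subset_convexHull ℝ _)
  have ht : t ⊆ convexHull ℝ (s ∪ t) := Set.subset_union_right.trans (subset_convexHull ℝ _)
  refine (mem_intrinsicInterior_iff_forall_isMaxOn (convex_convexHull ℝ _)).2 ⟨?_, fun u hu => ?_⟩
  · exact (convex_convexHull ℝ _).lineMap_mem (hs (intrinsicInterior_subset hx))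
      (ht (intrinsicInterior_subset hy)) (Set.Ioo_subset_Icc_self hc)
  set m := u (AffineMap.lineMap x y c) with hm
  have hsm : ∀ q ∈ s, u q ≤ m := fun q hq => hu (hs hq)
  have htm : ∀ q ∈ t, u q ≤ m := fun q hq => hu (ht hq)
  have hxm := hsm x (intrinsicInterior_subset hx)
  have hym := htm y (intrinsicInterior_subset hy)
  rw [AffineMap.apply_lineMap, AffineMap.lineMap_apply_ring'] at hm
  have hux : u x = m := by nlinarith [hc.1, hc.2]
  have huy : u y = m := by nlinarith [hc.1, hc.2]
  have hconst : Set.EqOn u (AffineMap.const ℝ E m) (s ∪ t) := by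
    rintro q (hq | hq)
    · exact (eq_of_isMaxOn_of_mem_intrinsicInterior hx (fun p hp => (hsm p hp).trans_eq hux.symm)
        (subset_affineSpan ℝ s hq)).trans hux
    · exact (eq_of_isMaxOn_of_mem_intrinsicInterior hy (fun p hp => (htm p hp).trans_eq huy.symm)
        (subset_affineSpan ℝ t hq)).trans huy
  intro q hq
  exact AffineMap.eqOn_affineSpan hconst (convexHull_subset_affineSpan _ hq)

theorem intrinsicInterior_smul [FiniteDimensional ℝ E] {r : ℝ} (hr : r ≠ 0) (s : Set E) :
    intrinsicInterior ℝ (r • s) = r • intrinsicInterior ℝ s :=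
  (LinearEquiv.smulOfNeZero ℝ E r hr).toAffineEquiv.intrinsicInterior_image s

theorem smul_add_smul_mem_intrinsicInterior [FiniteDimensional ℝ E] {t : Set E} {x y : E}
    {a b : ℝ} (hx : x ∈ intrinsicInterior ℝ s) (hy : y ∈ intrinsicInterior ℝ t) (ha : 0 < a)
    (hb : 0 < b) : a • x + b • y ∈ intrinsicInterior ℝ ((a + b) • convexHull ℝ (s ∪ t)) := by
  have hab : 0 < a + b := add_pos ha hb
  rw [intrinsicInterior_smul hab.ne']
  refine ⟨AffineMap.lineMap x y (b / (a + b)),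
    lineMap_mem_intrinsicInterior_convexHull_union hx hy
      ⟨div_pos hb hab, (div_lt_one hab).2 (lt_add_of_pos_left b ha)⟩, ?_⟩
  simp only [AffineMap.lineMap_apply_module]
  match_scalars
  all_goals field_simp
  ring

theorem add_smul_mem_add_one_smul {V : Type*} [AddCommGroup V] [Module ℝ V] {s : Set V} {p q : V}
    {k : ℝ} (hs : Convex ℝ s) (hp : p ∈ s) (hq : q ∈ s) (hk : 0 ≤ k) :
    q + k • p ∈ (k + 1) • s := by
  rw [add_comm k, hs.add_smul zero_le_one hk, one_smul]
  exact Set.add_mem_add hq (Set.smul_mem_smul_set hp)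

end IntrinsicInterior

section LatticePoints

variable {d e : ℕ} {x y p q : Fin d → ℝ} {P Q : Set (Fin d → ℝ)}

theorem IsLatticePt.add (hx : IsLatticePt x) (hy : IsLatticePt y) : IsLatticePt (x + y) := by
  intro i
  obtain ⟨a, ha⟩ := hx i
  obtain ⟨b, hb⟩ := hy i
  exact ⟨a + b, by simp [ha, hb]⟩

theorem IsLatticePt.sub (hx : IsLatticePt x) (hy : IsLatticePt y) : IsLatticePt (x - y) := by
  intro i
  obtain ⟨a, ha⟩ := hx i
  obtain ⟨b, hb⟩ := hy i
  exact ⟨a - b, by simp [ha, hb]⟩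

theorem IsLatticePt.natCast_smul (hx : IsLatticePt x) (k : ℕ) : IsLatticePt ((k : ℝ) • x) := by
  intro i
  obtain ⟨a, ha⟩ := hx i
  exact ⟨k * a, by simp [ha]⟩

theorem isLatticePt_lineMap_iff (hp : IsLatticePt p) (k : ℕ) :
    IsLatticePt (AffineMap.lineMap p q (k : ℝ)) ↔ IsLatticePt ((k : ℝ) • q) := by
  have hline : AffineMap.lineMap p q (k : ℝ) = (k : ℝ) • q + (p - (k : ℝ) • p) := by
    rw [AffineMap.lineMap_apply_module]
    module
  have hp' : IsLatticePt (p - (k : ℝ) • p) := hp.sub (hp.natCast_smul k)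
  rw [hline]
  exact ⟨fun h => by simpa using h.sub hp', fun h => h.add hp'⟩

theorem IsLatticePolytope.convex (hP : IsLatticePolytope P) : Convex ℝ P := by
  obtain ⟨V, -, -, rfl⟩ := hP
  exact convex_convexHull ℝ _

theorem IsLatticePolytope.exists_mem_isLatticePt (hP : IsLatticePolytope P) :
    ∃ v ∈ P, IsLatticePt v := by
  obtain ⟨V, ⟨v, hv⟩, hlat, rfl⟩ := hP
  exact ⟨v, subset_convexHull ℝ _ hv, hlat v hv⟩

theorem isLatticePolytope_singleton (hx : IsLatticePt x) : IsLatticePolytope {x} :=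
  ⟨{x}, Finset.singleton_nonempty x, by simpa using hx, by simp⟩

theorem IsLatticePolytope.convexHull_union (hP : IsLatticePolytope P) (hQ : IsLatticePolytope Q) :
    IsLatticePolytope (convexHull ℝ (P ∪ Q)) := by
  classical
  obtain ⟨V, hV, hVlat, rfl⟩ := hP
  obtain ⟨W, -, hWlat, rfl⟩ := hQ
  refine ⟨V ∪ W, hV.inl, fun v hv => (Finset.mem_union.1 hv).elim (hVlat v) (hWlat v), ?_⟩
  rw [convexHull_convexHull_union_left, convexHull_convexHull_union_right, Finset.coe_union]

theorem IsLatticePolytope.convexHull_insert (hP : IsLatticePolytope P) (hx : IsLatticePt x) :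
    IsLatticePolytope (convexHull ℝ (insert x P)) :=
  (isLatticePolytope_singleton hx).convexHull_union hP

/-- The affine map `φ` sends the lattice points of the affine hull of `Q` to lattice points. -/
def MapsLatticeOn (Q : Set (Fin d → ℝ)) (φ : (Fin d → ℝ) →ᵃ[ℝ] (Fin e → ℝ)) : Prop :=
  ∀ x ∈ affineSpan ℝ Q, IsLatticePt x → IsLatticePt (φ x)

variable {φ : (Fin d → ℝ) →ᵃ[ℝ] (Fin e → ℝ)}

theorem MapsLatticeOn.mono (hφ : MapsLatticeOn Q φ) (hPQ : P ⊆ Q) : MapsLatticeOn P φ :=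
  fun x hx => hφ x (affineSpan_mono ℝ hPQ hx)

theorem IsLatticePolytope.image (hQ : IsLatticePolytope Q) (hφ : MapsLatticeOn Q φ) :
    IsLatticePolytope (φ '' Q) := by
  classical
  obtain ⟨V, hV, hlat, rfl⟩ := hQ
  refine ⟨V.image φ, hV.image φ, fun w hw => ?_, by rw [φ.image_convexHull, Finset.coe_image]⟩
  obtain ⟨v, hv, rfl⟩ := Finset.mem_image.1 hw
  exact hφ v (subset_affineSpan ℝ _ (subset_convexHull ℝ _ hv)) (hlat v hv)

theorem MapsLatticeOn.natCast_smul (hφ : MapsLatticeOn Q φ) (hp : p ∈ affineSpan ℝ Q)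
    (hplat : IsLatticePt p) (hq : q ∈ affineSpan ℝ Q) {k : ℕ} (hk : IsLatticePt ((k : ℝ) • q)) :
    IsLatticePt ((k : ℝ) • φ q) := by
  rw [← isLatticePt_lineMap_iff (hφ p hp hplat), ← AffineMap.apply_lineMap]
  exact hφ _ (AffineMap.lineMap_mem _ hp hq) ((isLatticePt_lineMap_iff hplat k).2 hk)

theorem IsIntegralOn.exists_natCast_mul_eq {h : (Fin d → ℝ) →ᵃ[ℝ] ℝ} (hh : IsIntegralOn Q h)
    (hp : p ∈ affineSpan ℝ Q) (hplat : IsLatticePt p) (hp0 : h p = 0) (hq : q ∈ affineSpan ℝ Q)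
    {k : ℕ} (hk : IsLatticePt ((k : ℝ) • q)) : ∃ z : ℤ, k * h q = z := by
  obtain ⟨z, hz⟩ := hh _ (AffineMap.lineMap_mem (k : ℝ) hp hq)
    ((isLatticePt_lineMap_iff hplat k).2 hk)
  rw [AffineMap.apply_lineMap, hp0, AffineMap.lineMap_apply_module] at hz
  exact ⟨z, by simpa using hz⟩

end LatticePoints

section Codegree

variable {d e : ℕ} {P Q : Set (Fin d → ℝ)} {k l : ℕ}

/-- The dilate `kQ`, for `k` positive, has a lattice point in its relative interior. The point is
recorded as `k • p` with `p` in the relative interior of `Q` itself. -/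
def HasInteriorLatticePt (k : ℕ) (Q : Set (Fin d → ℝ)) : Prop :=
  0 < k ∧ ∃ p ∈ intrinsicInterior ℝ Q, IsLatticePt ((k : ℝ) • p)

theorem hasInteriorLatticePt_iff :
    HasInteriorLatticePt k Q ↔
      0 < k ∧ ∃ x ∈ intrinsicInterior ℝ ((k : ℝ) • Q), IsLatticePt x := by
  refine and_congr_right fun hk => ?_
  rw [intrinsicInterior_smul (Nat.cast_ne_zero.2 hk.ne')]
  exact Set.exists_mem_image.symm

theorem polyCodeg_eq_sInf (Q : Set (Fin d → ℝ)) :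
    polyCodeg Q = sInf {k | HasInteriorLatticePt k Q} := by
  simp only [hasInteriorLatticePt_iff, polyCodeg, IsHollow, not_forall, not_not, exists_prop]

theorem HasInteriorLatticePt.polyCodeg_le (h : HasInteriorLatticePt k Q) : polyCodeg Q ≤ k := by
  rw [polyCodeg_eq_sInf]
  exact Nat.sInf_le h

theorem hasInteriorLatticePt_one_singleton {x : Fin d → ℝ} (hx : IsLatticePt x) :
    HasInteriorLatticePt 1 {x} :=
  ⟨one_pos, x, by simp, by simpa using hx⟩

theorem HasInteriorLatticePt.convexHull_union (hP : HasInteriorLatticePt k P)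
    (hQ : HasInteriorLatticePt l Q) : HasInteriorLatticePt (k + l) (convexHull ℝ (P ∪ Q)) := by
  obtain ⟨hk, p, hp, hkp⟩ := hP
  obtain ⟨hl, q, hq, hlq⟩ := hQ
  refine hasInteriorLatticePt_iff.2 ⟨Nat.add_pos_left hk l, _, ?_, hkp.add hlq⟩
  rw [Nat.cast_add]
  exact smul_add_smul_mem_intrinsicInterior hp hq (Nat.cast_pos.2 hk) (Nat.cast_pos.2 hl)

theorem HasInteriorLatticePt.image (hQ : IsLatticePolytope Q) (h : HasInteriorLatticePt k Q)
    {φ : (Fin d → ℝ) →ᵃ[ℝ] (Fin e → ℝ)} (hφ : MapsLatticeOn Q φ) :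
    HasInteriorLatticePt k (φ '' Q) := by
  obtain ⟨hk, p, hp, hkp⟩ := h
  obtain ⟨v, hv, hvlat⟩ := hQ.exists_mem_isLatticePt
  exact ⟨hk, φ p, image_mem_intrinsicInterior_image hQ.convex φ hp,
    hφ.natCast_smul (subset_affineSpan ℝ Q hv) hvlat
      (subset_affineSpan ℝ Q (intrinsicInterior_subset hp)) hkp⟩

theorem IsLatticePolytope.exists_hasInteriorLatticePt (hQ : IsLatticePolytope Q) :
    ∃ k, HasInteriorLatticePt k Q := by
  obtain ⟨V, hV, hlat, rfl⟩ := hQ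
  induction hV using Finset.Nonempty.cons_induction with
  | singleton v =>
    exact ⟨1, by simpa using hasInteriorLatticePt_one_singleton (hlat v (by simp))⟩
  | cons v W hv _ ih =>
    obtain ⟨k, hk⟩ := ih fun w hw => hlat w (Finset.mem_cons_of_mem hw)
    have hv1 := hasInteriorLatticePt_one_singleton (hlat v (Finset.mem_cons_self v W))
    refine ⟨1 + k, ?_⟩
    simpa only [convexHull_convexHull_union_right, Finset.coe_cons, Set.insert_eq] using
      hv1.convexHull_union hk

theorem IsLatticePolytope.hasInteriorLatticePt_polyCodeg (hQ : IsLatticePolytope Q) :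
    HasInteriorLatticePt (polyCodeg Q) Q := by
  rw [polyCodeg_eq_sInf]
  exact Nat.sInf_mem hQ.exists_hasInteriorLatticePt

theorem HasInteriorLatticePt.of_le (hQ : IsLatticePolytope Q) (h : HasInteriorLatticePt k Q)
    (hkl : k ≤ l) : HasInteriorLatticePt l Q := by
  obtain ⟨v, hv, hvlat⟩ := hQ.exists_mem_isLatticePt
  induction l, hkl using Nat.le_induction with
  | base => exact h
  | succ m _ hm =>
    have := hm.convexHull_union (hasInteriorLatticePt_one_singleton hvlat)
    rwa [Set.union_eq_left.2 (Set.singleton_subset_iff.2 hv), hQ.convex.convexHull_eq] at this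

end Codegree

section Embeddings

variable {E : Type*} [AddCommGroup E] [Module ℝ E] {m l : ℕ}

/-- The affine map `x ↦ (f x, h x)` into `ℝ^{m+1}`. -/
def snocAffineMap (f : E →ᵃ[ℝ] (Fin m → ℝ)) (h : E →ᵃ[ℝ] ℝ) : E →ᵃ[ℝ] (Fin (m + 1) → ℝ) :=
  AffineMap.pi fun i => Fin.lastCases h (fun j => (AffineMap.proj j).comp f) i

theorem snocAffineMap_apply (f : E →ᵃ[ℝ] (Fin m → ℝ)) (h : E →ᵃ[ℝ] ℝ) (x : E) :
    snocAffineMap f h x = (Fin.snoc (f x) (h x) : Fin (m + 1) → ℝ) := by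
  ext i
  induction i using Fin.lastCases <;> simp [snocAffineMap]

/-- The affine map `x ↦ (x, c)` into `ℝ^{m+l}`. -/
def appendAffineMap (m : ℕ) (c : Fin l → ℝ) : (Fin m → ℝ) →ᵃ[ℝ] (Fin (m + l) → ℝ) :=
  AffineMap.pi fun i => Fin.addCases AffineMap.proj (fun j => AffineMap.const ℝ _ (c j)) i

theorem appendAffineMap_apply (c : Fin l → ℝ) (x : Fin m → ℝ) :
    appendAffineMap m c x = (Fin.append x c : Fin (m + l) → ℝ) := by
  ext i
  induction i using Fin.addCases <;> simp [appendAffineMap]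

theorem isLatticePt_snoc {x : Fin m → ℝ} {c : ℝ} :
    IsLatticePt (Fin.snoc x c : Fin (m + 1) → ℝ) ↔ IsLatticePt x ∧ ∃ z : ℤ, c = z := by
  simp [IsLatticePt, Fin.forall_fin_succ']

theorem IsLatticePt.append {x : Fin m → ℝ} {c : Fin l → ℝ} (hx : IsLatticePt x)
    (hc : IsLatticePt c) : IsLatticePt (Fin.append x c : Fin (m + l) → ℝ) := by
  intro i
  induction i using Fin.addCases with
  | left j => simpa using hx j
  | right j => simpa using hc j

end Embeddings

section Pyramids

variable {d e : ℕ} {P B : Set (Fin d → ℝ)} {Q : Set (Fin e → ℝ)} {v : Fin d → ℝ}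

/-- `P` is a lattice pyramid with apex `v` over the lattice polytope `B`, all three living in the
same space: some affine functional that is integral on `P` vanishes on `B` and is `1` at `v`. -/
structure IsPyramidWithApex (P B : Set (Fin d → ℝ)) (v : Fin d → ℝ) : Prop where
  base : IsLatticePolytope B
  apex : IsLatticePt v
  eq_convexHull : P = convexHull ℝ (insert v B)
  exists_height : ∃ h : (Fin d → ℝ) →ᵃ[ℝ] ℝ, IsIntegralOn P h ∧ (∀ b ∈ B, h b = 0) ∧ h v = 1

namespace IsPyramidWithApex

theorem apex_mem (h : IsPyramidWithApex P B v) : v ∈ P :=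
  h.eq_convexHull ▸ subset_convexHull ℝ _ (Set.mem_insert v B)

theorem base_subset (h : IsPyramidWithApex P B v) : B ⊆ P :=
  h.eq_convexHull ▸ (Set.subset_insert v B).trans (subset_convexHull ℝ _)

end IsPyramidWithApex

theorem pyramidOver_eq (B : Set (Fin d → ℝ)) :
    pyramidOver B = convexHull ℝ (insert (Fin.snoc (0 : Fin d → ℝ) (1 : ℝ))
      (snocAffineMap (AffineMap.id ℝ _) (AffineMap.const ℝ _ 0) '' B)) := by
  have hsnoc : (fun x : Fin d → ℝ => (Fin.snoc x (0 : ℝ) : Fin (d + 1) → ℝ)) =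
      snocAffineMap (AffineMap.id ℝ _) (AffineMap.const ℝ _ 0) :=
    funext fun x =>
      (snocAffineMap_apply (AffineMap.id ℝ _) (AffineMap.const ℝ _ 0) x).symm
  rw [pyramidOver, hsnoc, Set.union_singleton]

theorem isPyramidWithApex_pyramidOver (hB : IsLatticePolytope B) :
    IsPyramidWithApex (pyramidOver B)
      (snocAffineMap (AffineMap.id ℝ _) (AffineMap.const ℝ _ 0) '' B)
      (Fin.snoc (0 : Fin d → ℝ) (1 : ℝ)) where
  base := hB.image fun x _ hx => by
    rw [snocAffineMap_apply, isLatticePt_snoc]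
    exact ⟨hx, 0, by simp⟩
  apex := isLatticePt_snoc.2 ⟨fun _ => ⟨0, by simp⟩, 1, by simp⟩
  eq_convexHull := pyramidOver_eq B
  exists_height := by
    refine ⟨AffineMap.proj (Fin.last d), fun y _ hy => hy (Fin.last d), ?_, by simp⟩
    rintro _ ⟨b, -, rfl⟩
    simp [snocAffineMap_apply]

theorem IsPyramidWithApex.exists_of_latticeIso {B : Set (Fin e → ℝ)} {w : Fin e → ℝ}
    (h : IsPyramidWithApex Q B w) (hPQ : LatticeIso P Q) : ∃ B' v, IsPyramidWithApex P B' v := by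
  obtain ⟨f, g, hfP, hgQ, -, hfg, hf, hg⟩ := hPQ
  obtain ⟨η, hη, hηB, hηw⟩ := h.exists_height
  have hsub : Q ⊆ affineSpan ℝ Q := subset_affineSpan ℝ Q
  have hf_span : ∀ x ∈ affineSpan ℝ P, f x ∈ affineSpan ℝ Q := fun x hx => by
    rw [← hfP, ← AffineSubspace.map_span]
    exact AffineSubspace.mem_map_of_mem f hx
  refine ⟨g '' B, g w, h.base.image (MapsLatticeOn.mono hg h.base_subset),
    hg w (hsub h.apex_mem) h.apex, ?_, η.comp f,
    fun x hx hxlat => hη _ (hf_span x hx) (hf x hx hxlat), ?_, ?_⟩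
  · rw [← hgQ, ← Set.image_insert_eq, ← AffineMap.image_convexHull, ← h.eq_convexHull]
  · rintro _ ⟨b, hb, rfl⟩
    rw [AffineMap.comp_apply, hfg b (hsub (h.base_subset hb)), hηB b hb]
  · rw [AffineMap.comp_apply, hfg w (hsub h.apex_mem), hηw]

theorem IsLatticePyramid.eq_singleton_or_isPyramidWithApex (hP : IsLatticePyramid P) :
    (∃ v, IsLatticePt v ∧ P = {v}) ∨ ∃ B v, IsPyramidWithApex P B v :=
  hP.imp_right fun ⟨_, _, hB, hiso⟩ =>
    (isPyramidWithApex_pyramidOver hB).exists_of_latticeIso hiso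

theorem latticeIso_image_of_leftInverse {f : (Fin d → ℝ) →ᵃ[ℝ] (Fin e → ℝ)}
    {g : (Fin e → ℝ) →ᵃ[ℝ] (Fin d → ℝ)} (hgf : Function.LeftInverse g f)
    (hf : MapsLatticeOn P f) (hg : MapsLatticeOn (f '' P) g) : LatticeIso P (f '' P) := by
  refine ⟨f, g, rfl, hgf.image_image P, fun x _ => hgf x, fun y hy => ?_, hf, hg⟩
  rw [← AffineSubspace.map_span] at hy
  obtain ⟨x, -, rfl⟩ := hy
  exact congrArg f (hgf x)

theorem IsPyramidWithApex.isLatticePyramid (h : IsPyramidWithApex P B v) : IsLatticePyramid P := by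
  obtain ⟨η, hη, hηB, hηv⟩ := h.exists_height
  let τ : (Fin d → ℝ) →ᵃ[ℝ] (Fin d → ℝ) := AffineMap.id ℝ _ - AffineMap.const ℝ _ v
  let f := snocAffineMap τ η
  let g : (Fin (d + 1) → ℝ) →ᵃ[ℝ] (Fin d → ℝ) :=
    (LinearMap.funLeft ℝ ℝ Fin.castSucc).toAffineMap + AffineMap.const ℝ _ v
  have hτ : ∀ x, IsLatticePt x → IsLatticePt (τ x) := fun x hx => hx.sub h.apex
  have hf : ∀ x, f x = Fin.snoc (τ x) (η x) := snocAffineMap_apply τ η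
  have himage : f '' P = pyramidOver (τ '' B) := by
    rw [pyramidOver_eq, h.eq_convexHull, AffineMap.image_convexHull, Set.image_insert_eq,
      Set.image_image]
    have hfv : f v = Fin.snoc (0 : Fin d → ℝ) (1 : ℝ) := by simp [hf, τ, hηv]
    rw [hfv, Set.image_congr fun b hb => ?_]
    simp [hf, snocAffineMap_apply, hηB b hb]
  refine Or.inr ⟨d, τ '' B, h.base.image fun x _ => hτ x, himage ▸
    latticeIso_image_of_leftInverse (g := g) (fun x => ?_) (fun x hx hxlat => ?_)
      fun y _ hy => ?_⟩
  · ext i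
    simp [g, hf, τ, LinearMap.funLeft_apply]
  · rw [hf, isLatticePt_snoc]
    exact ⟨hτ x hxlat, hη x hx hxlat⟩
  · exact IsLatticePt.add (fun i => hy i.castSucc) h.apex

end Pyramids

section CodegreeBounds

variable {d n N : ℕ} {P B : Set (Fin d → ℝ)} {v b p : Fin d → ℝ} {h : (Fin d → ℝ) →ᵃ[ℝ] ℝ} {k : ℕ}

namespace IsPyramidWithApex

theorem le_of_forall_base_le {u : (Fin d → ℝ) →ᵃ[ℝ] ℝ} {c : ℝ} (hP : IsPyramidWithApex P B v)
    (hB : ∀ b ∈ B, u b ≤ c) (hv : u v ≤ c) (hp : p ∈ P) : u p ≤ c := by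
  rw [hP.eq_convexHull] at hp
  exact le_of_mem_convexHull (Set.forall_mem_insert.2 ⟨hv, hB⟩) hp

theorem exists_lineMap_eq (hP : IsPyramidWithApex P B v) (hp : p ∈ P) :
    ∃ b ∈ B, ∃ t : ℝ, AffineMap.lineMap b v t = p := by
  obtain ⟨b₀, hb₀, -⟩ := hP.base.exists_mem_isLatticePt
  rw [hP.eq_convexHull, convexHull_insert ⟨b₀, hb₀⟩, hP.base.convex.convexHull_eq,
    mem_convexJoin] at hp
  obtain ⟨_, rfl, b, hb, hp⟩ := hp
  rw [segment_symm, segment_eq_image_lineMap] at hp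
  obtain ⟨t, -, ht⟩ := hp
  exact ⟨b, hb, t, ht⟩

theorem height_mem_Ioo (hP : IsPyramidWithApex P B v) (hB : ∀ b ∈ B, h b = 0) (hv : h v = 1)
    (hp : p ∈ intrinsicInterior ℝ P) : h p ∈ Set.Ioo 0 1 := by
  obtain ⟨b, hb, -⟩ := hP.base.exists_mem_isLatticePt
  have hnonneg : ∀ q ∈ P, (-h) q ≤ 0 := fun q =>
    hP.le_of_forall_base_le (fun b hb => by simp [hB b hb]) (by simp [hv])
  have hle_one : ∀ q ∈ P, h q ≤ 1 := fun q =>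
    hP.le_of_forall_base_le (fun b hb => by simp [hB b hb]) hv.le
  have hpP := intrinsicInterior_subset hp
  refine ⟨(neg_nonpos.1 (hnonneg p hpP)).lt_of_ne fun h0 => ?_,
    (hle_one p hpP).lt_of_ne fun h1 => ?_⟩
  · have hmax : IsMaxOn (-h) P p := fun q hq => (hnonneg q hq).trans_eq (by simp [← h0])
    have hconst : (-h) v = (-h) p :=
      eq_of_isMaxOn_of_mem_intrinsicInterior hp hmax (subset_affineSpan ℝ P hP.apex_mem)
    simp [← h0, hv] at hconst
  · have hmax : IsMaxOn h P p := fun q hq => (hle_one q hq).trans_eq h1.symm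
    have hconst : h b = h p :=
      eq_of_isMaxOn_of_mem_intrinsicInterior hp hmax (subset_affineSpan ℝ P (hP.base_subset hb))
    simp [h1, hB b hb] at hconst

theorem mem_intrinsicInterior_base {t : ℝ} (hP : IsPyramidWithApex P B v) (hb : b ∈ B)
    (hp : AffineMap.lineMap b v t ∈ intrinsicInterior ℝ P) : b ∈ intrinsicInterior ℝ B := by
  obtain ⟨h, -, hB, hv⟩ := hP.exists_height
  refine (mem_intrinsicInterior_iff_forall_isMaxOn hP.base.convex).2 ⟨hb, fun u hu => ?_⟩
  -- Tilting `u` by a multiple of the height makes it constant on the line through `b` and `v`.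
  let u' := u + (u b - u v) • h
  have hu'B : ∀ q ∈ B, u' q = u q := fun q hq => by simp [u', hB q hq]
  have hu'v : u' v = u b := by simp [u', hv]
  have hu'p : u' (AffineMap.lineMap b v t) = u b := by
    rw [AffineMap.apply_lineMap, hu'B b hb, hu'v, AffineMap.lineMap_same_apply]
  have hmax : IsMaxOn u' P (AffineMap.lineMap b v t) := fun q hq =>
    hu'p ▸ hP.le_of_forall_base_le (fun q hq => (hu'B q hq).trans_le (hu hq)) hu'v.le hq
  intro q hq
  have hconst := eq_of_isMaxOn_of_mem_intrinsicInterior hp hmax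
    (subset_affineSpan ℝ P (hP.base_subset hq))
  rwa [hu'B q hq, hu'p] at hconst

theorem exists_lt_hasInteriorLatticePt_base (hP : IsPyramidWithApex P B v)
    (hk : HasInteriorLatticePt k P) : ∃ j < k, HasInteriorLatticePt j B := by
  obtain ⟨h, hint, hB, hv⟩ := hP.exists_height
  obtain ⟨hk0, p, hp, hkp⟩ := hk
  have hpP := intrinsicInterior_subset hp
  obtain ⟨b, hb, t, rfl⟩ := hP.exists_lineMap_eq hpP
  obtain ⟨b₀, hb₀, hb₀lat⟩ := hP.base.exists_mem_isLatticePt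
  have hsub := subset_affineSpan ℝ P
  obtain ⟨z, hz⟩ := hint.exists_natCast_mul_eq (hsub (hP.base_subset hb₀)) hb₀lat (hB b₀ hb₀)
    (hsub hpP) hkp
  have hpt : h (AffineMap.lineMap b v t) = t := by
    rw [AffineMap.apply_lineMap, hB b hb, hv, AffineMap.lineMap_apply_module]
    simp
  obtain ⟨ht0, ht1⟩ := hpt ▸ hP.height_mem_Ioo hB hv hp
  rw [hpt] at hz
  have hk0' : (0 : ℝ) < k := Nat.cast_pos.2 hk0
  have hz0 : 0 < z := by
    have : (0 : ℝ) < z := hz ▸ mul_pos hk0' ht0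
    exact_mod_cast this
  have hzk : z < k := by
    have : (z : ℝ) < k := hz ▸ mul_lt_of_lt_one_right hk0' ht1
    exact_mod_cast this
  lift z to ℕ using hz0.le
  have hzk' : z < k := by exact_mod_cast hzk
  refine ⟨k - z, by omega, by omega, b, hP.mem_intrinsicInterior_base hb hp, ?_⟩
  have hjb : ((k - z : ℕ) : ℝ) • b = (k : ℝ) • AffineMap.lineMap b v t - (z : ℝ) • v := by
    have hz' : (k : ℝ) * t = z := by exact_mod_cast hz
    rw [AffineMap.lineMap_apply_module, Nat.cast_sub hzk'.le, ← hz']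
    module
  rw [hjb]
  exact hkp.sub (hP.apex.natCast_smul z)

theorem isLatticePolytope (hP : IsPyramidWithApex P B v) : IsLatticePolytope P :=
  hP.eq_convexHull ▸ hP.base.convexHull_insert hP.apex

theorem polyCodeg_base_lt (hP : IsPyramidWithApex P B v) : polyCodeg B < polyCodeg P := by
  obtain ⟨j, hj, hjB⟩ := hP.exists_lt_hasInteriorLatticePt_base
    hP.isLatticePolytope.hasInteriorLatticePt_polyCodeg
  exact hjB.polyCodeg_le.trans_lt hj

end IsPyramidWithApex

theorem polyCodeg_convexHull_image_union_le {F G : Set (Fin n → ℝ)}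
    {φ ψ : (Fin n → ℝ) →ᵃ[ℝ] (Fin N → ℝ)} (hF : IsLatticePolytope F) (hG : IsLatticePolytope G)
    (hφ : MapsLatticeOn F φ) (hψ : MapsLatticeOn G ψ) :
    polyCodeg (convexHull ℝ (φ '' F ∪ ψ '' G)) ≤ polyCodeg F + polyCodeg G :=
  ((hF.hasInteriorLatticePt_polyCodeg.image hF hφ).convexHull_union
    (hG.hasInteriorLatticePt_polyCodeg.image hG hψ)).polyCodeg_le

theorem exists_eq_convexHull_image_union_of_latticeIso_cayleyTwo {P : Set (Fin N → ℝ)}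
    {F G : Set (Fin n → ℝ)} (hP : LatticeIso P (cayleyTwo F G)) :
    ∃ φ ψ : (Fin n → ℝ) →ᵃ[ℝ] (Fin N → ℝ),
      MapsLatticeOn F φ ∧ MapsLatticeOn G ψ ∧ P = convexHull ℝ (φ '' F ∪ ψ '' G) := by
  obtain ⟨-, g, -, hgP, -, -, -, hg⟩ := hP
  have hcayley : cayleyTwo F G = convexHull ℝ
      (appendAffineMap n ![1, 0] '' F ∪ appendAffineMap n ![0, 1] '' G) := by
    simp only [cayleyTwo, appendAffineMap_apply]
  have hmaps : ∀ {K : Set (Fin n → ℝ)} {c : Fin 2 → ℝ}, IsLatticePt c →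
      appendAffineMap n c '' K ⊆ cayleyTwo F G →
      MapsLatticeOn K (g.comp (appendAffineMap n c)) := by
    intro K c hc hK y hy hylat
    refine hg _ (affineSpan_mono ℝ hK ?_) ?_
    · rw [← AffineSubspace.map_span]
      exact AffineSubspace.mem_map_of_mem _ hy
    · rw [appendAffineMap_apply]
      exact hylat.append hc
  have hsub := hcayley ▸ subset_convexHull ℝ _
  refine ⟨g.comp (appendAffineMap n ![1, 0]), g.comp (appendAffineMap n ![0, 1]),
    hmaps ?_ (Set.subset_union_left.trans hsub), hmaps ?_ (Set.subset_union_right.trans hsub), ?_⟩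
  · exact Fin.forall_fin_two.2 ⟨⟨1, by simp⟩, 0, by simp⟩
  · exact Fin.forall_fin_two.2 ⟨⟨0, by simp⟩, 1, by simp⟩
  · rw [← hgP, hcayley, AffineMap.image_convexHull, Set.image_union, Set.image_image,
      Set.image_image]
    rfl

end CodegreeBounds

section Facets

variable {d : ℕ} {S Q : Set (Fin d → ℝ)} {x y p : Fin d → ℝ} {V : Finset (Fin d → ℝ)}

theorem exists_affineMap_eq_zero_and_eq_one_of_notMem_affineSpan (hS : S.Nonempty)
    (hp : p ∉ affineSpan ℝ S) : ∃ m : (Fin d → ℝ) →ᵃ[ℝ] ℝ, (∀ s ∈ S, m s = 0) ∧ m p = 1 := by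
  obtain ⟨s₀, hs₀⟩ := hS
  have hp' : p - s₀ ∉ vectorSpan ℝ S := fun h => hp <| by
    rw [← AffineSubspace.vsub_right_mem_direction_iff_mem (subset_affineSpan ℝ S hs₀),
      direction_affineSpan]
    exact h
  obtain ⟨f, hf, hker⟩ := Submodule.exists_le_ker_of_notMem hp'
  refine ⟨(f (p - s₀))⁻¹ • (f.toAffineMap - AffineMap.const ℝ _ (f s₀)), fun s hs => ?_, ?_⟩
  · have hfs : f (s - s₀) = 0 := hker (vsub_mem_vectorSpan ℝ hs hs₀)
    simp [← map_sub, hfs]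
  · simpa [← map_sub] using inv_mul_cancel₀ hf

theorem polyDim_insert (hS : S.Nonempty) (hp : p ∉ affineSpan ℝ S) :
    polyDim (insert p S) = polyDim S + 1 := by
  obtain ⟨s₀, hs₀⟩ := hS
  have hlt : vectorSpan ℝ S < vectorSpan ℝ (insert p S) := by
    refine (vectorSpan_mono ℝ (Set.subset_insert p S)).lt_of_ne fun heq => hp ?_
    rw [← AffineSubspace.vsub_right_mem_direction_iff_mem (subset_affineSpan ℝ S hs₀),
      direction_affineSpan, heq]
    exact vsub_mem_vectorSpan ℝ (Set.mem_insert p S) (Set.mem_insert_of_mem p hs₀)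
  rw [polyDim, polyDim, direction_affineSpan, direction_affineSpan]
  exact le_antisymm (finrank_vectorSpan_insert_le_set ℝ S p)
    (Nat.succ_le_of_lt (Submodule.finrank_lt_finrank_of_lt hlt))

theorem isExposed_setOf_eq {u : (Fin d → ℝ) →ᵃ[ℝ] ℝ} {c : ℝ} (hle : ∀ q ∈ Q, u q ≤ c) :
    IsExposed ℝ Q {q ∈ Q | u q = c} := by
  rintro ⟨e, he, hue⟩
  have hlin : ∀ a b, u.linear a ≤ u.linear b ↔ u a ≤ u b := fun a b => by
    rw [u.decomp]
    simp
  refine ⟨LinearMap.toContinuousLinearMap u.linear, Set.ext fun q => and_congr_right fun hq => ?_⟩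
  simp only [LinearMap.coe_toContinuousLinearMap', hlin]
  exact ⟨fun h p hp => h ▸ hle p hp, fun h => (hle q hq).antisymm (hue ▸ h e he)⟩

theorem isFacet_setOf_eq {u : (Fin d → ℝ) →ᵃ[ℝ] ℝ} {c : ℝ} (hle : ∀ q ∈ Q, u q ≤ c)
    (hne : {q ∈ Q | u q = c}.Nonempty) (hp : p ∈ Q) (hpc : u p ≠ c)
    (hspan : Q ⊆ affineSpan ℝ (insert p {q ∈ Q | u q = c})) : IsFacet Q {q ∈ Q | u q = c} := by
  have hEp : p ∉ affineSpan ℝ {q ∈ Q | u q = c} := fun h =>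
    hpc (AffineMap.eqOn_affineSpan (g := AffineMap.const ℝ _ c) (fun q hq => hq.2) h)
  have hQ : affineSpan ℝ (insert p {q ∈ Q | u q = c}) = affineSpan ℝ Q :=
    (affineSpan_mono ℝ (Set.insert_subset hp fun q hq => hq.1)).antisymm
      (affineSpan_le.2 hspan)
  refine ⟨isExposed_setOf_eq hle, hne, ?_⟩
  rw [← polyDim_insert hne hEp, polyDim, hQ, polyDim]

theorem exists_ratio_test {ι : Type*} {V : Finset ι} {a m : ι → ℝ} (ha : ∀ v ∈ V, a v ≤ 1)
    (hm : ∃ v ∈ V, 0 < m v) :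
    ∃ s : ℝ, 0 ≤ s ∧ (∀ v ∈ V, a v + s * m v ≤ 1) ∧ ∃ v ∈ V, 0 < m v ∧ a v + s * m v = 1 := by
  obtain ⟨v₀, hv₀, hmin⟩ := (V.filter (0 < m ·)).exists_min_image (fun v => (1 - a v) / m v)
    (by simpa [Finset.Nonempty] using hm)
  simp only [Finset.mem_filter] at hv₀ hmin
  have hs : 0 ≤ (1 - a v₀) / m v₀ := div_nonneg (sub_nonneg.2 (ha v₀ hv₀.1)) hv₀.2.le
  refine ⟨_, hs, fun v hv => ?_, v₀, hv₀.1, hv₀.2, ?_⟩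
  · rcases le_or_gt (m v) 0 with h | h
    · linarith [ha v hv, mul_nonpos_of_nonneg_of_nonpos hs h]
    · have := (le_div_iff₀ h).1 (hmin v ⟨hv, h⟩)
      linarith
  · rw [div_mul_cancel₀ _ hv₀.2.ne', add_sub_cancel]

/-- Affine functionals cutting off `y` from `x`, normalised to be at most `1` on `V`. Among these,
one that attains the value `1` as often as possible on `V` defines a facet of `conv V`. -/
def IsCutFunctional (V : Finset (Fin d → ℝ)) (x y : Fin d → ℝ) (u : (Fin d → ℝ) →ᵃ[ℝ] ℝ) : Prop :=
  u x = 0 ∧ 0 < u y ∧ ∀ v ∈ V, u v ≤ 1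

theorem exists_isCutFunctional (V : Finset (Fin d → ℝ)) (hxy : y ≠ x) :
    ∃ u, IsCutFunctional V x y u := by
  classical
  obtain ⟨m, hmx, hmy⟩ := exists_affineMap_eq_zero_and_eq_one_of_notMem_affineSpan
    (Set.singleton_nonempty x) (p := y) (by simp [hxy])
  obtain ⟨M, hM⟩ := (V.image m).exists_le
  have hM0 : 0 < max M 1 := lt_max_of_lt_right one_pos
  refine ⟨(max M 1)⁻¹ • m, by simp [hmx], by simp [hmy], fun v hv => ?_⟩
  have hmv : m v ≤ max M 1 := le_max_of_le_left (hM _ (Finset.mem_image_of_mem m hv))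
  simpa [inv_mul_le_one₀ hM0] using hmv

theorem exists_affineMap_eq_zero_and_pos
    (hx : x ∈ intrinsicInterior ℝ (convexHull ℝ (V : Set (Fin d → ℝ))))
    (hxS : x ∈ S) (hV : ¬ (V : Set (Fin d → ℝ)) ⊆ affineSpan ℝ S) (y : Fin d → ℝ) :
    ∃ m : (Fin d → ℝ) →ᵃ[ℝ] ℝ, (∀ s ∈ S, m s = 0) ∧ 0 ≤ m y ∧ ∃ v ∈ V, 0 < m v := by
  obtain ⟨v₀, hv₀, hv₀S⟩ := Set.not_subset.1 hV
  obtain ⟨m, hmS, hmy, hmv₀⟩ : ∃ m : (Fin d → ℝ) →ᵃ[ℝ] ℝ,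
      (∀ s ∈ S, m s = 0) ∧ 0 ≤ m y ∧ m v₀ ≠ 0 := by
    obtain ⟨m, hmS, hmv₀⟩ :=
      exists_affineMap_eq_zero_and_eq_one_of_notMem_affineSpan ⟨x, hxS⟩ hv₀S
    rcases le_total 0 (m y) with h | h
    · exact ⟨m, hmS, h, by simp [hmv₀]⟩
    · exact ⟨-m, fun s hs => by simp [hmS s hs], by simpa using h, by simp [hmv₀]⟩
  refine ⟨m, hmS, hmy, ?_⟩
  by_contra! hneg
  have hmax : IsMaxOn m (convexHull ℝ (V : Set (Fin d → ℝ))) x := fun q hq =>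
    (le_of_mem_convexHull hneg hq).trans_eq (hmS x hxS).symm
  have hconst : m v₀ = m x := eq_of_isMaxOn_of_mem_intrinsicInterior hx hmax
    (subset_affineSpan ℝ _ (subset_convexHull ℝ _ hv₀))
  exact hmv₀ (hconst.trans (hmS x hxS))

theorem IsCutFunctional.exists_filter_ssubset {u : (Fin d → ℝ) →ᵃ[ℝ] ℝ}
    (hu : IsCutFunctional V x y u)
    (hx : x ∈ intrinsicInterior ℝ (convexHull ℝ (V : Set (Fin d → ℝ))))
    (hV : ¬ (V : Set (Fin d → ℝ)) ⊆
      affineSpan ℝ (insert x {v ∈ (V : Set (Fin d → ℝ)) | u v = 1})) :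
    ∃ u', IsCutFunctional V x y u' ∧ V.filter (u · = 1) ⊂ V.filter (u' · = 1) := by
  obtain ⟨hux, huy, huV⟩ := hu
  obtain ⟨m, hm, hmy, hmV⟩ := exists_affineMap_eq_zero_and_pos hx (Set.mem_insert x _) hV y
  obtain ⟨s, hs, hle, v, hv, hmv, hsv⟩ := exists_ratio_test huV hmV
  have hmact : ∀ w ∈ V, u w = 1 → m w = 0 := fun w hw huw => hm w (Or.inr ⟨hw, huw⟩)
  refine ⟨u + s • m, ⟨by simp [hux, hm x (Set.mem_insert x _)], ?_, hle⟩, ?_⟩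
  · exact add_pos_of_pos_of_nonneg huy (mul_nonneg hs hmy)
  · rw [Finset.ssubset_iff_of_subset]
    · exact ⟨v, by simpa [hv] using hsv, fun h =>
        hmv.ne' (hmact v hv (Finset.mem_filter.1 h).2)⟩
    · intro w hw
      obtain ⟨hwV, huw⟩ := Finset.mem_filter.1 hw
      simp [hwV, huw, hmact w hwV huw]

theorem exists_isCutFunctional_span
    (hx : x ∈ intrinsicInterior ℝ (convexHull ℝ (V : Set (Fin d → ℝ)))) (hxy : y ≠ x) :
    ∃ u, IsCutFunctional V x y u ∧
      (V : Set (Fin d → ℝ)) ⊆ affineSpan ℝ (insert x {v ∈ (V : Set (Fin d → ℝ)) | u v = 1}) := by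
  obtain ⟨u, hu, hmax⟩ := Set.Finite.exists_maximalFor'
    (fun u : (Fin d → ℝ) →ᵃ[ℝ] ℝ => V.filter (u · = 1)) {u | IsCutFunctional V x y u}
    (V.powerset.finite_toSet.subset (by
      rintro _ ⟨u, -, rfl⟩
      exact Finset.mem_powerset.2 (Finset.filter_subset _ V)))
    (exists_isCutFunctional V hxy)
  refine ⟨u, hu, ?_⟩
  by_contra hV
  obtain ⟨u', hu', hlt⟩ := IsCutFunctional.exists_filter_ssubset hu hx hV
  exact hlt.2 (hmax hu' hlt.1)

theorem exists_isFacet_and_pos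
    (hx : x ∈ intrinsicInterior ℝ (convexHull ℝ (V : Set (Fin d → ℝ))))
    (hy : y ∈ affineSpan ℝ (V : Set (Fin d → ℝ))) (hxy : y ≠ x) :
    ∃ u : (Fin d → ℝ) →ᵃ[ℝ] ℝ, u x = 0 ∧ 0 < u y ∧
      (∀ q ∈ convexHull ℝ (V : Set (Fin d → ℝ)), u q ≤ 1) ∧
      IsFacet (convexHull ℝ (V : Set (Fin d → ℝ)))
        {q ∈ convexHull ℝ (V : Set (Fin d → ℝ)) | u q = 1} ∧
      y ∈ affineSpan ℝ (insert x {q ∈ convexHull ℝ (V : Set (Fin d → ℝ)) | u q = 1}) := by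
  obtain ⟨u, ⟨hux, huy, huV⟩, hV⟩ := exists_isCutFunctional_span hx hxy
  set Q := convexHull ℝ (V : Set (Fin d → ℝ))
  have hspan : affineSpan ℝ (V : Set (Fin d → ℝ)) ≤
      affineSpan ℝ (insert x {q ∈ Q | u q = 1}) :=
    affineSpan_le.2 <| hV.trans <| affineSpan_mono ℝ <| Set.insert_subset_insert
      fun v hv => ⟨subset_convexHull ℝ _ hv.1, hv.2⟩
  have hle : ∀ q ∈ Q, u q ≤ 1 := fun q hq => le_of_mem_convexHull huV hq
  have hne : {q ∈ Q | u q = 1}.Nonempty := by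
    refine Set.nonempty_iff_ne_empty.2 fun hempty => hxy ?_
    simpa [hempty] using hspan hy
  exact ⟨u, hux, huy, hle, isFacet_setOf_eq hle hne (intrinsicInterior_subset hx)
    (by simp [hux]) ((convexHull_subset_affineSpan _).trans hspan), hspan hy⟩

end Facets

section Reflexive

variable {d : ℕ} {T P Q : Set (Fin d → ℝ)} {v x y p : Fin d → ℝ}

theorem IsLatticePolytope.natCast_smul (hP : IsLatticePolytope P) (r : ℕ) :
    IsLatticePolytope ((r : ℝ) • P) :=
  hP.image (φ := ((r : ℝ) • LinearMap.id (R := ℝ) (M := Fin d → ℝ)).toAffineMap)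
    fun _ _ hx => hx.natCast_smul r

/-- Every facet of `Q` has lattice distance one from `x`, in the sense of `IsReflexivePolytope`. -/
def FacetsAtDistanceOne (Q : Set (Fin d → ℝ)) (x : Fin d → ℝ) : Prop :=
  ∀ F, IsFacet Q F → ∃ u : (Fin d → ℝ) →ᵃ[ℝ] ℝ, IsIntegralOn Q u ∧ ∀ f ∈ F, u f = u x + 1

/-- A lattice point `y ≠ x` would lie strictly between `x` and some facet, at lattice distance
strictly between `0` and `1` from `x`. -/
theorem FacetsAtDistanceOne.eq_of_mem_intrinsicInterior (hQ : IsLatticePolytope Q)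
    (hfac : FacetsAtDistanceOne Q x) (hx : x ∈ intrinsicInterior ℝ Q) (hxlat : IsLatticePt x)
    (hy : y ∈ intrinsicInterior ℝ Q) (hylat : IsLatticePt y) : y = x := by
  by_contra hyx
  obtain ⟨V, -, -, rfl⟩ := hQ
  have hxaff := subset_affineSpan ℝ _ (intrinsicInterior_subset hx)
  have hyaff := subset_affineSpan ℝ _ (intrinsicInterior_subset hy)
  obtain ⟨u, hux, huy, hle, hfacet, hspan⟩ :=
    exists_isFacet_and_pos hx (by rwa [affineSpan_convexHull] at hyaff) hyx
  obtain ⟨w, hw, hwF⟩ := hfac _ hfacet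
  have huw : u y = w y - w x := by
    refine AffineMap.eqOn_affineSpan (g := w - AffineMap.const ℝ _ (w x)) ?_ hspan
    rintro q (rfl | hq)
    · simp [hux]
    · simp [hq.2, hwF q hq]
  obtain ⟨a, ha⟩ := hw x hxaff hxlat
  obtain ⟨b, hb⟩ := hw y hyaff hylat
  have hone : 1 ≤ u y := by
    rw [huw, ha, hb] at huy ⊢
    exact_mod_cast huy
  have hconst : u x = u y :=
    eq_of_isMaxOn_of_mem_intrinsicInterior hy (fun q hq => (hle q hq).trans hone) hxaff
  linarith

theorem notMem_affineSpan_of_polyCodeg_lt (hT : IsLatticePolytope T)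
    (hlt : polyCodeg T < polyCodeg (convexHull ℝ (insert v T))) : v ∉ affineSpan ℝ T := by
  intro hv
  obtain ⟨hk, p, hp, hplat⟩ := hT.hasInteriorLatticePt_polyCodeg
  have hP : convexHull ℝ (insert v T) ⊆ affineSpan ℝ T :=
    convexHull_min (Set.insert_subset hv (subset_affineSpan ℝ T)) (AffineSubspace.convex _)
  exact hlt.not_ge <| HasInteriorLatticePt.polyCodeg_le ⟨hk, p,
    intrinsicInterior_subset_of_subset_affineSpan (convex_convexHull ℝ _)
      ((Set.subset_insert v T).trans (subset_convexHull ℝ _)) hP hp, hplat⟩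

theorem exists_isFacet_smul_convexHull_insert (hT : T.Nonempty) (hv : v ∉ affineSpan ℝ T) {r : ℝ}
    (hr : 0 < r) : ∃ F, IsFacet (r • convexHull ℝ (insert v T)) F ∧ r • T ⊆ F := by
  obtain ⟨m, hmT, hmv⟩ := exists_affineMap_eq_zero_and_eq_one_of_notMem_affineSpan hT hv
  let u : (Fin d → ℝ) →ᵃ[ℝ] ℝ := -m.comp (r⁻¹ • LinearMap.id (R := ℝ)).toAffineMap
  have hu : ∀ q, u (r • q) = -m q := fun q => by simp [u, hr.ne']
  have hmem : ∀ q ∈ insert v T, r • q ∈ r • convexHull ℝ (insert v T) := fun q hq =>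
    Set.smul_mem_smul_set (subset_convexHull ℝ _ hq)
  have hsub : r • T ⊆ {q ∈ r • convexHull ℝ (insert v T) | u q = 0} := by
    rintro _ ⟨q, hq, rfl⟩
    exact ⟨hmem q (Set.mem_insert_of_mem v hq), by simp [hu, hmT q hq]⟩
  refine ⟨_, isFacet_setOf_eq (p := r • v) ?_ (hT.smul_set.mono hsub)
    (hmem v (Set.mem_insert v T)) (by simp [hu, hmv]) ?_, hsub⟩
  · rintro _ ⟨q, hq, rfl⟩
    have : (-m) q ≤ 0 := le_of_mem_convexHull (by simp +contextual [hmT, hmv]) hq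
    simpa [hu] using this
  · refine subset_trans ?_ (affineSpan_mono ℝ (Set.insert_subset_insert hsub))
    rw [← convexHull_smul, Set.smul_set_insert]
    exact convexHull_subset_affineSpan _

theorem isPyramidWithApex_of_isIntegralOn_smul (hT : IsLatticePolytope T) (hv : IsLatticePt v)
    {k : ℕ} (hp : p ∈ T) (hplat : IsLatticePt ((k : ℝ) • p)) {u : (Fin d → ℝ) →ᵃ[ℝ] ℝ}
    (hu : IsIntegralOn (((k + 1 : ℕ) : ℝ) • convexHull ℝ (insert v T)) u)
    (huT : ∀ q ∈ ((k + 1 : ℕ) : ℝ) • T, u q = u (v + (k : ℝ) • p) + 1) :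
    IsPyramidWithApex (convexHull ℝ (insert v T)) T v := by
  set P := convexHull ℝ (insert v T) with hP
  have hinsert : insert v T ⊆ P := subset_convexHull ℝ _
  have hpP : p ∈ P := hinsert (Set.mem_insert_of_mem v hp)
  let τ : (Fin d → ℝ) →ᵃ[ℝ] (Fin d → ℝ) := AffineMap.id ℝ _ + AffineMap.const ℝ _ ((k : ℝ) • p)
  have hτP : τ '' P ⊆ ((k + 1 : ℕ) : ℝ) • P := by
    rintro _ ⟨q, hq, rfl⟩
    simpa [τ] using add_smul_mem_add_one_smul (convex_convexHull ℝ _) hpP hq k.cast_nonneg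
  have huτ : ∀ q ∈ affineSpan ℝ P, IsLatticePt q → ∃ z : ℤ, u (τ q) = z := by
    refine fun q hq hqlat => hu (τ q) (affineSpan_mono ℝ hτP ?_) (hqlat.add hplat)
    rw [← AffineSubspace.map_span]
    exact AffineSubspace.mem_map_of_mem _ hq
  refine ⟨hT, hv, hP, AffineMap.const ℝ _ (u (τ v) + 1) - u.comp τ, fun q hq hqlat => ?_,
    fun t ht => ?_, by simp⟩
  · obtain ⟨a, ha⟩ := huτ v (subset_affineSpan ℝ P (hinsert (Set.mem_insert v T))) hv
    obtain ⟨b, hb⟩ := huτ q hq hqlat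
    exact ⟨a + 1 - b, by simp [ha, hb]⟩
  · have hτt : τ t ∈ ((k + 1 : ℕ) : ℝ) • T := by
      simpa [τ] using add_smul_mem_add_one_smul hT.convex hp ht k.cast_nonneg
    exact sub_eq_zero.2 (huT _ hτt).symm

theorem isPyramidWithApex_of_isGorenstein (hT : IsLatticePolytope T) (hv : IsLatticePt v)
    (hGor : IsGorenstein (convexHull ℝ (insert v T)))
    (hlt : polyCodeg T < polyCodeg (convexHull ℝ (insert v T))) :
    IsPyramidWithApex (convexHull ℝ (insert v T)) T v := by
  obtain ⟨r, hr, x, hx, hxlat, hfac : FacetsAtDistanceOne _ x⟩ := hGor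
  have hTr : polyCodeg T < r :=
    hlt.trans_le (hasInteriorLatticePt_iff.2 ⟨hr, x, hx, hxlat⟩).polyCodeg_le
  obtain ⟨k, rfl⟩ := Nat.exists_eq_succ_of_ne_zero hr.ne'
  obtain ⟨hk, p, hp, hplat⟩ :=
    hT.hasInteriorLatticePt_polyCodeg.of_le hT (Nat.le_of_lt_succ hTr)
  have hpv : v + (k : ℝ) • p ∈ intrinsicInterior ℝ ((k.succ : ℝ) • convexHull ℝ (insert v T)) := by
    have hvv : v ∈ intrinsicInterior ℝ {v} := by simp
    rw [Nat.cast_succ, add_comm (k : ℝ), Set.insert_eq]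
    simpa only [one_smul] using
      smul_add_smul_mem_intrinsicInterior hvv hp one_pos (Nat.cast_pos.2 hk)
  obtain rfl : v + (k : ℝ) • p = x :=
    hfac.eq_of_mem_intrinsicInterior ((hT.convexHull_insert hv).natCast_smul _) hx hxlat hpv
      (hv.add hplat)
  obtain ⟨w, hw, -⟩ := hT.exists_mem_isLatticePt
  obtain ⟨F, hF, hTF⟩ := exists_isFacet_smul_convexHull_insert ⟨w, hw⟩
    (notMem_affineSpan_of_polyCodeg_lt hT hlt) (Nat.cast_pos.2 hr)
  obtain ⟨u, hu, huF⟩ := hfac F hF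
  exact isPyramidWithApex_of_isIntegralOn_smul hT hv (intrinsicInterior_subset hp) hplat hu
    fun q hq => huF q (hTF hq)

end Reflexive

theorem stmt12_general {N n : ℕ} {P : Set (Fin N → ℝ)} {F G : Set (Fin n → ℝ)}
    (hG : IsLatticePolytope G) (hGor : IsGorenstein P) (hiso : LatticeIso P (cayleyTwo F G))
    (hcod : polyCodeg F + polyCodeg G ≤ polyCodeg P) (hF : IsLatticePyramid F) :
    IsLatticePyramid P := by
  obtain ⟨φ, ψ, hφ, hψ, rfl⟩ := exists_eq_convexHull_image_union_of_latticeIso_cayleyTwo hiso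
  suffices ∃ T v, IsLatticePolytope T ∧ IsLatticePt v ∧ convexHull ℝ (φ '' F ∪ ψ '' G) =
      convexHull ℝ (insert v T) ∧ polyCodeg T < polyCodeg F + polyCodeg G by
    obtain ⟨T, v, hT, hv, hTv, hlt⟩ := this
    rw [hTv] at hGor hcod ⊢
    exact (isPyramidWithApex_of_isGorenstein hT hv hGor (hlt.trans_le hcod)).isLatticePyramid
  rcases hF.eq_singleton_or_isPyramidWithApex with ⟨v, hv, rfl⟩ | ⟨B, v, hBv⟩
  · refine ⟨ψ '' G, φ v, hG.image hψ, hφ v (by simp) hv, by simp, ?_⟩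
    have hle := (hG.hasInteriorLatticePt_polyCodeg.image hG hψ).polyCodeg_le
    have hpos := (isLatticePolytope_singleton hv).hasInteriorLatticePt_polyCodeg.1
    omega
  · have hφB := hφ.mono hBv.base_subset
    refine ⟨convexHull ℝ (φ '' B ∪ ψ '' G), φ v,
      (hBv.base.image hφB).convexHull_union (hG.image hψ),
      hφ v (subset_affineSpan ℝ F hBv.apex_mem) hBv.apex, ?_, ?_⟩
    · rw [hBv.eq_convexHull, AffineMap.image_convexHull, convexHull_convexHull_union_left,
        Set.image_insert_eq, Set.insert_union, Set.insert_eq, Set.insert_eq,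
        convexHull_convexHull_union_right]
    · have hle := polyCodeg_convexHull_image_union_le hBv.base hG hφB hψ
      have hlt := hBv.polyCodeg_base_lt
      omega

/-- If a Gorenstein polytope `P` is reducible with factors `F` and `G` and `F` is a
lattice pyramid, then `P` is a lattice pyramid. -/
theorem stmt12 {N n : ℕ} (P : Set (Fin N → ℝ)) (F G : Set (Fin n → ℝ))
    (hP : IsLatticePolytope P) (hF : IsLatticePolytope F) (hG : IsLatticePolytope G)
    (hGor : IsGorenstein P) (hred : IsReducibleWith P F G)
    (hFpyr : IsLatticePyramid F) :
    IsLatticePyramid P :=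
  stmt12_general hG hGor hred.1.1 hred.2.le hFpyr
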